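/- Let a, c be complex numbers with Re(c − a) > 0 and such that c and c − a are not nonpositive integers or zero. Then Σ_{k=1}^∞ (a)_k / (k (c)_k) = ψ(c) − ψ(c − a), where ψ is the digamma function. -/

import Mathlib

/-- The Pochhammer symbol `(a)_k = a (a+1) ⋯ (a+k-1)`. -/
noncomputable def poch (a : ℂ) (k : ℕ) : ℂ := Polynomial.eval a (ascPochhammer ℂ k)

/-- The digamma function `ψ(z) = Γ'(z)/Γ(z)`. -/
noncomputable def digamma (z : ℂ) : ℂ := deriv Complex.Gamma z / Complex.Gamma z

/-!
Replacing `c` by `c + 1` lowers both sides by `(c - a)⁻¹ - c⁻¹` (for the series the differences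
of terms telescope), so the difference of the two sides is unchanged along `c, c + 1, c + 2, …`.
It also tends to `0` there: once `0 < c.re`, the terms for `c + n` are at most `‖c‖ / ‖c + n‖`
times those for `c`, and `ψ (s + n) - log n → 0` whenever `0 < s.re`. The last limit is the
logarithmic derivative of Euler's limit `GammaSeq s n → Γ s`. Differentiating it is legitimate
because the convergence is locally uniform: `‖GammaSeq s n‖ ≤ Γ (s.re)`, and by the Schwarz
lemma and Ascoli's theorem a locally bounded, pointwise convergent family of holomorphic functions
converges locally uniformly.
-/

open Filter Topology Metric Asymptotics
open scoped Nat

section LocallyBoundedHolomorphic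

variable {ι E : Type*} [NormedAddCommGroup E] [NormedSpace ℂ E] {F : ι → ℂ → E}

theorem equicontinuousAt_of_eventually_norm_le {z : ℂ} {C : ℝ}
    (hd : ∀ᶠ w in 𝓝 z, ∀ i, DifferentiableAt ℂ (F i) w)
    (hC : ∀ᶠ w in 𝓝 z, ∀ i, ‖F i w‖ ≤ C) : EquicontinuousAt F z := by
  obtain ⟨r, hr, hball⟩ := eventually_nhds_iff_ball.1 (hd.and hC)
  have hlim : Tendsto (fun w ↦ (C + C) / r * dist w z) (𝓝 z) (𝓝 0) := by
    have h : Continuous fun w ↦ (C + C) / r * dist w z := by fun_prop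
    simpa using h.tendsto z
  refine equicontinuousAt_of_continuity_modulus _ hlim F ?_
  filter_upwards [ball_mem_nhds z hr] with w hw i
  rw [dist_comm]
  refine Complex.dist_le_div_mul_dist_of_mapsTo_ball
    (fun v hv ↦ ((hball v hv).1 i).differentiableWithinAt) (fun v hv ↦ ?_) hw
  rw [mem_closedBall, dist_eq_norm]
  exact norm_sub_le_of_le ((hball v hv).2 i) ((hball z (mem_ball_self hr)).2 i)

theorem tendstoLocallyUniformlyOn_of_locally_norm_le {l : Filter ι} {f : ℂ → E} {U : Set ℂ}
    (hU : IsOpen U) (hd : ∀ i, DifferentiableOn ℂ (F i) U)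
    (hbdd : ∀ z ∈ U, ∃ C : ℝ, ∀ᶠ w in 𝓝 z, ∀ i, ‖F i w‖ ≤ C)
    (hlim : ∀ z ∈ U, Tendsto (F · z) l (𝓝 (f z))) : TendstoLocallyUniformlyOn F f l U := by
  rw [tendstoLocallyUniformlyOn_iff_forall_isCompact hU]
  intro K hKU hK
  have hequi : EquicontinuousOn F K := fun z hz ↦ by
    obtain ⟨C, hC⟩ := hbdd z (hKU hz)
    refine (equicontinuousAt_of_eventually_norm_le ?_ hC).equicontinuousWithinAt K
    filter_upwards [hU.mem_nhds (hKU hz)] with w hw i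
    exact (hd i).differentiableAt (hU.mem_nhds hw)
  have htend := (EquicontinuousOn.tendsto_uniformOnFun_iff_pi' (𝔖 := {K}) (by simpa using hK)
    (by simpa using hequi) l f).2 <| by
      rw [tendsto_pi_nhds]
      exact fun z ↦ hlim z (hKU (by simpa using z.2))
  exact UniformOnFun.tendsto_iff_tendstoUniformlyOn.1 htend K rfl

end LocallyBoundedHolomorphic

section GammaSeq

theorem isOpen_re_pos : IsOpen {s : ℂ | 0 < s.re} :=
  isOpen_lt continuous_const Complex.continuous_re

theorem ne_neg_natCast_of_re_pos {s : ℂ} (hs : 0 < s.re) (n : ℕ) : s ≠ -n := by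
  rintro rfl
  exact hs.not_ge (by simp)

theorem add_natCast_ne_zero {s : ℂ} (hs : ∀ m : ℕ, s ≠ -m) (n : ℕ) : s + n ≠ 0 :=
  fun h ↦ hs n (eq_neg_of_add_eq_zero_left h)

theorem add_natCast_ne_neg_natCast {s : ℂ} (hs : ∀ m : ℕ, s ≠ -m) (n m : ℕ) : s + n ≠ -m :=
  fun h ↦ hs (n + m) (by push_cast; linear_combination h)

theorem realGammaSeq_le_Gamma {x : ℝ} (hx : 0 < x) (n : ℕ) :
    Real.GammaSeq x n ≤ Real.Gamma x := by
  have hΓ := Real.Gamma_pos_of_pos hx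
  rcases eq_or_ne n 0 with rfl | hn
  · simp [Real.GammaSeq, Real.zero_rpow hx.ne', hΓ.le]
  have hfeq {y : ℝ} (hy : 0 < y) :
      (Real.log ∘ Real.Gamma) (y + 1) = (Real.log ∘ Real.Gamma) y + Real.log y := by
    simp only [Function.comp_apply]
    rw [Real.Gamma_add_one hy.ne', Real.log_mul hy.ne' (Real.Gamma_pos_of_pos hy).ne', add_comm]
  have hle : Real.BohrMollerup.logGammaSeq x n ≤ Real.log (Real.Gamma x) := by
    simpa using Real.BohrMollerup.ge_logGammaSeq Real.convexOn_log_Gamma hfeq hx hn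
  calc Real.GammaSeq x n = Real.exp (Real.BohrMollerup.logGammaSeq x n) := by
        have hprod : ∀ j ∈ Finset.range (n + 1), x + (j : ℝ) ≠ 0 := fun j _ ↦ by positivity
        rw [Real.BohrMollerup.logGammaSeq, Real.exp_sub, Real.exp_add,
          Real.exp_log (by positivity), ← Real.log_prod hprod,
          Real.exp_log (Finset.prod_pos fun j _ ↦ by positivity), Real.GammaSeq,
          Real.rpow_def_of_pos (by positivity), mul_comm x]
    _ ≤ Real.Gamma x := (Real.le_log_iff_exp_le hΓ).1 hle

theorem norm_GammaSeq_le_realGammaSeq_re {s : ℂ} (hs : 0 < s.re) (n : ℕ) :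
    ‖Complex.GammaSeq s n‖ ≤ Real.GammaSeq s.re n := by
  rw [Complex.GammaSeq, Real.GammaSeq, norm_div, norm_mul, norm_prod,
    Complex.norm_natCast_cpow_of_re_ne_zero n hs.ne', Complex.norm_natCast]
  refine div_le_div_of_nonneg_left (by positivity)
    (Finset.prod_pos fun j _ ↦ by positivity) ?_
  gcongr with j
  simpa using Complex.re_le_norm (s + j)

theorem differentiableAt_GammaSeq {s : ℂ} (hs : ∀ m : ℕ, s ≠ -m) (n : ℕ) :
    DifferentiableAt ℂ (Complex.GammaSeq · n) s := by
  have hs0 : s ≠ 0 := by simpa using hs 0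
  refine ((differentiableAt_id.const_cpow (.inr hs0)).mul_const _).div (by fun_prop) ?_
  exact Finset.prod_ne_zero_iff.2 fun j _ ↦ add_natCast_ne_zero hs j

theorem differentiableOn_GammaSeq (n : ℕ) :
    DifferentiableOn ℂ (Complex.GammaSeq · n) {s | 0 < s.re} := fun _ hs ↦
  (differentiableAt_GammaSeq (ne_neg_natCast_of_re_pos hs) n).differentiableWithinAt

theorem logDeriv_GammaSeq {s : ℂ} (hs : ∀ m : ℕ, s ≠ -m) {n : ℕ} (hn : n ≠ 0) :
    logDeriv (Complex.GammaSeq · n) s =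
      Complex.log n - ∑ j ∈ Finset.range (n + 1), (s + j)⁻¹ := by
  have hn' : (n : ℂ) ≠ 0 := Nat.cast_ne_zero.2 hn
  have hpow_ne : (n : ℂ) ^ s ≠ 0 := by simp [hn']
  have hfac : (n ! : ℂ) ≠ 0 := Nat.cast_ne_zero.2 n.factorial_ne_zero
  have hpow : HasDerivAt (fun z : ℂ ↦ (n : ℂ) ^ z) ((n : ℂ) ^ s * Complex.log n * 1) s :=
    (hasDerivAt_id s).const_cpow (.inl hn')
  have hnum : logDeriv (fun z : ℂ ↦ (n : ℂ) ^ z * n !) s = Complex.log n := by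
    rw [logDeriv_mul_const s _ hfac, logDeriv_apply, hpow.deriv, mul_one,
      mul_div_cancel_left₀ _ hpow_ne]
  have hden : logDeriv (fun z : ℂ ↦ ∏ j ∈ Finset.range (n + 1), (z + j)) s =
      ∑ j ∈ Finset.range (n + 1), (s + j)⁻¹ := by
    rw [logDeriv_prod (fun j _ ↦ add_natCast_ne_zero hs j) (fun j _ ↦ by fun_prop)]
    simp [logDeriv_apply]
  rw [← hnum, ← hden]
  exact logDeriv_div s (mul_ne_zero hpow_ne hfac)
    (Finset.prod_ne_zero_iff.2 fun j _ ↦ add_natCast_ne_zero hs j)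
    (hpow.differentiableAt.mul_const _) (by fun_prop)

theorem tendstoLocallyUniformlyOn_GammaSeq :
    TendstoLocallyUniformlyOn (fun n s ↦ Complex.GammaSeq s n) Complex.Gamma atTop
      {s | 0 < s.re} := by
  refine tendstoLocallyUniformlyOn_of_locally_norm_le isOpen_re_pos
    differentiableOn_GammaSeq (fun s hs ↦ ?_) fun s _ ↦ Complex.GammaSeq_tendsto_Gamma s
  have hcont : ContinuousOn (fun w : ℂ ↦ Real.Gamma w.re) {s | 0 < s.re} :=
    (Real.convexOn_Gamma.continuousOn isOpen_Ioi).comp Complex.continuous_re.continuousOn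
      fun _ hw ↦ hw
  have hnhds := isOpen_re_pos.mem_nhds hs
  refine ⟨Real.Gamma s.re + 1, ?_⟩
  filter_upwards [hnhds, (hcont.continuousAt hnhds).eventually_le_const (lt_add_one _)]
    with w hw hΓ n
  exact (norm_GammaSeq_le_realGammaSeq_re hw n).trans ((realGammaSeq_le_Gamma hw n).trans hΓ)

theorem tendsto_inv_GammaSeq (s : ℂ) :
    Tendsto (fun n ↦ (Complex.GammaSeq s n)⁻¹) atTop (𝓝 (Complex.Gamma s)⁻¹) := by
  by_cases hs : Complex.Gamma s = 0
  · -- At a pole of `Γ`, both `Γ` and (eventually) `GammaSeq` take the junk value `x / 0 = 0`.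
    obtain ⟨m, rfl⟩ := (Complex.Gamma_eq_zero_iff s).1 hs
    refine tendsto_const_nhds.congr' ?_
    filter_upwards [eventually_ge_atTop m] with n hmn
    have hprod : ∏ j ∈ Finset.range (n + 1), (-(m : ℂ) + j) = 0 :=
      Finset.prod_eq_zero (Finset.mem_range.2 (Nat.lt_succ_of_le hmn)) (neg_add_cancel _)
    rw [hs, Complex.GammaSeq, hprod, div_zero]
  · exact (Complex.GammaSeq_tendsto_Gamma s).inv₀ hs

end GammaSeq

section Digamma

theorem tendsto_log_sub_sum_inv_digamma {s : ℂ} (hs : 0 < s.re) :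
    Tendsto (fun n : ℕ ↦ Complex.log n - ∑ j ∈ Finset.range (n + 1), (s + j)⁻¹) atTop
      (𝓝 (Complex.digamma s)) := by
  have hlim := Complex.logDeriv_tendsto isOpen_re_pos hs tendstoLocallyUniformlyOn_GammaSeq
    (.of_forall differentiableOn_GammaSeq) (Complex.Gamma_ne_zero_of_re_pos hs)
  refine hlim.congr' ?_
  filter_upwards [eventually_ne_atTop 0] with n hn
  exact logDeriv_GammaSeq (ne_neg_natCast_of_re_pos hs) hn

theorem digamma_add_natCast {s : ℂ} (hs : ∀ m : ℕ, s ≠ -m) (n : ℕ) :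
    Complex.digamma (s + n) = Complex.digamma s + ∑ j ∈ Finset.range n, (s + j)⁻¹ := by
  induction n with
  | zero => simp
  | succ n ih =>
    rw [Nat.cast_succ, ← add_assoc,
      Complex.digamma_apply_add_one _ (add_natCast_ne_neg_natCast hs n), ih,
      Finset.sum_range_succ, add_assoc]

theorem tendsto_digamma_add_natCast_sub_log {s : ℂ} (hs : 0 < s.re) :
    Tendsto (fun n : ℕ ↦ Complex.digamma (s + (n + 1 : ℕ)) - Complex.log n) atTop (𝓝 0) := by
  have hlim := (tendsto_log_sub_sum_inv_digamma hs).const_sub (Complex.digamma s)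
  rw [sub_self] at hlim
  refine hlim.congr fun n ↦ ?_
  rw [digamma_add_natCast (ne_neg_natCast_of_re_pos hs)]
  ring

theorem tendsto_digamma_add_natCast_sub {s t : ℂ} (hs : 0 < s.re) (ht : 0 < t.re) :
    Tendsto (fun n : ℕ ↦ Complex.digamma (s + n) - Complex.digamma (t + n)) atTop (𝓝 0) := by
  rw [← tendsto_add_atTop_iff_nat 1]
  simpa using (tendsto_digamma_add_natCast_sub_log hs).sub (tendsto_digamma_add_natCast_sub_log ht)

end Digamma

section Pochhammer

theorem poch_zero (a : ℂ) : poch a 0 = 1 := by simp [poch]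

theorem poch_succ (a : ℂ) (k : ℕ) : poch a (k + 1) = poch a k * (a + k) :=
  ascPochhammer_succ_eval k a

theorem poch_eq_prod_range (a : ℂ) (k : ℕ) : poch a k = ∏ j ∈ Finset.range k, (a + j) := by
  induction k with
  | zero => exact poch_zero a
  | succ k ih => rw [poch_succ, ih, Finset.prod_range_succ]

theorem poch_succ_left (a : ℂ) (k : ℕ) : poch a (k + 1) = a * poch (a + 1) k := by
  simp [poch, ascPochhammer_succ_left, Polynomial.eval_comp]

theorem poch_ne_zero {c : ℂ} (hc : ∀ n : ℕ, c ≠ -n) (k : ℕ) : poch c k ≠ 0 := by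
  rw [poch_eq_prod_range]
  exact Finset.prod_ne_zero_iff.2 fun j _ ↦ add_natCast_ne_zero hc j

theorem norm_le_norm_add_natCast {s : ℂ} (hs : 0 ≤ s.re) (n : ℕ) : ‖s‖ ≤ ‖s + n‖ := by
  rw [← sq_le_sq₀ (norm_nonneg _) (norm_nonneg _), Complex.sq_norm, Complex.sq_norm,
    Complex.normSq_apply, Complex.normSq_apply]
  simp only [Complex.add_re, Complex.natCast_re, Complex.add_im, Complex.natCast_im, add_zero]
  gcongr <;> simp

theorem norm_poch_le_norm_poch_add_natCast {s : ℂ} (hs : 0 ≤ s.re) (n k : ℕ) :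
    ‖poch s k‖ ≤ ‖poch (s + n) k‖ := by
  simp only [poch_eq_prod_range, norm_prod]
  gcongr with j
  rw [add_right_comm]
  exact norm_le_norm_add_natCast (by simp only [Complex.add_re, Complex.natCast_re]; positivity) n

theorem poch_div_poch_eq_GammaSeq (a c : ℂ) {n : ℕ} (hn : n ≠ 0) :
    poch a (n + 1) / poch c (n + 1) =
      Complex.GammaSeq c n * (Complex.GammaSeq a n)⁻¹ * (n : ℂ) ^ (a - c) := by
  have hn' : (n : ℂ) ≠ 0 := Nat.cast_ne_zero.2 hn
  have hfac : (n ! : ℂ) ≠ 0 := Nat.cast_ne_zero.2 n.factorial_ne_zero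
  have hpow (s : ℂ) : (n : ℂ) ^ s ≠ 0 := by simp [hn']
  rw [Complex.GammaSeq, Complex.GammaSeq, ← poch_eq_prod_range, ← poch_eq_prod_range, inv_div,
    Complex.cpow_sub _ _ hn']
  field_simp [hpow a, hpow c]

theorem isBigO_poch_div_poch (a c : ℂ) :
    (fun n : ℕ ↦ poch a (n + 1) / poch c (n + 1)) =O[atTop]
      fun n : ℕ ↦ (n : ℝ) ^ (-(c - a).re) := by
  have hbdd : (fun n ↦ Complex.GammaSeq c n * (Complex.GammaSeq a n)⁻¹) =O[atTop]
      fun _ ↦ (1 : ℝ) :=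
    ((Complex.GammaSeq_tendsto_Gamma c).mul (tendsto_inv_GammaSeq a)).isBigO_one ℝ
  have hpow : (fun n : ℕ ↦ (n : ℂ) ^ (a - c)) =O[atTop] fun n : ℕ ↦ (n : ℝ) ^ (-(c - a).re) := by
    refine .of_norm_eventuallyLE ?_
    filter_upwards [eventually_gt_atTop 0] with n hn
    rw [Complex.norm_natCast_cpow_of_pos hn, ← Complex.neg_re, neg_sub]
  refine ((hbdd.mul hpow).congr' ?_ (.of_eq (by simp)))
  filter_upwards [eventually_ne_atTop 0] with n hn
  exact (poch_div_poch_eq_GammaSeq a c hn).symm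

theorem tendsto_poch_div_poch {a c : ℂ} (hre : 0 < (c - a).re) :
    Tendsto (fun n : ℕ ↦ poch a (n + 1) / poch c (n + 1)) atTop (𝓝 0) :=
  (isBigO_poch_div_poch a c).trans_tendsto
    ((tendsto_rpow_neg_atTop hre).comp tendsto_natCast_atTop_atTop)

end Pochhammer

section Entry9

/-- The `k`-th term `(a)_{k+1} / ((k+1) (c)_{k+1})` of the series in Entry 9, indexed from `0`. -/
noncomputable def entry9Term (a c : ℂ) (k : ℕ) : ℂ :=
  poch a (k + 1) / (((k + 1 : ℕ) : ℂ) * poch c (k + 1))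

/-- The difference of the two sides of Entry 9. It is studied as a function of `c`, along
the progression `c, c + 1, c + 2, …`. -/
noncomputable def entry9Defect (a c : ℂ) : ℂ :=
  ∑' k, entry9Term a c k - (Complex.digamma c - Complex.digamma (c - a))

variable {a c : ℂ}

theorem summable_entry9Term (hre : 0 < (c - a).re) : Summable (entry9Term a c) := by
  have hinv : (fun k : ℕ ↦ (((k + 1 : ℕ) : ℂ))⁻¹) =O[atTop] fun k : ℕ ↦ (k : ℝ) ^ (-1 : ℝ) := by
    refine .of_norm_eventuallyLE ?_
    filter_upwards [eventually_gt_atTop 0] with k hk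
    rw [norm_inv, Complex.norm_natCast, Real.rpow_neg_one]
    gcongr
    exact k.le_succ
  refine summable_of_isBigO_nat (Real.summable_nat_rpow.2 (by linarith : -(c - a).re + -1 < -1))
    (((isBigO_poch_div_poch a c).mul hinv).congr' (.of_forall fun k ↦ ?_) ?_)
  · rw [entry9Term]
    ring
  · filter_upwards [eventually_gt_atTop 0] with k hk
    rw [Real.rpow_add (by positivity)]

theorem entry9Term_sub_entry9Term_add_one (hca : c ≠ a) (hc : ∀ n : ℕ, c ≠ -n) (k : ℕ) :
    entry9Term a c k - entry9Term a (c + 1) k =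
      (poch a (k + 1) / poch c (k + 1) - poch a (k + 2) / poch c (k + 2)) / (c - a) := by
  have hc0 : c ≠ 0 := by simpa using hc 0
  have hca0 : c - a ≠ 0 := sub_ne_zero.2 hca
  have hck : c + (k + 1 : ℕ) ≠ 0 := add_natCast_ne_zero hc (k + 1)
  have hk : ((k + 1 : ℕ) : ℂ) ≠ 0 := Nat.cast_ne_zero.2 k.succ_ne_zero
  have hpoch := poch_ne_zero hc (k + 1)
  have hshift : poch (c + 1) (k + 1) = poch c (k + 1) * (c + (k + 1 : ℕ)) / c := by
    rw [eq_div_iff hc0, ← poch_succ, poch_succ_left c (k + 1), mul_comm]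
  rw [entry9Term, entry9Term, hshift, poch_succ a (k + 1), poch_succ c (k + 1)]
  generalize ((k + 1 : ℕ) : ℂ) = x at *
  field_simp
  ring

theorem tsum_entry9Term_sub_tsum_entry9Term_add_one (hre : 0 < (c - a).re)
    (hc : ∀ n : ℕ, c ≠ -n) :
    ∑' k, entry9Term a c k - ∑' k, entry9Term a (c + 1) k = (c - a)⁻¹ - c⁻¹ := by
  have hre' : 0 < (c + 1 - a).re := by
    rw [add_sub_right_comm, Complex.add_re, Complex.one_re]
    positivity
  have hca : c - a ≠ 0 := fun h ↦ by simp [h] at hre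
  have hc0 : c ≠ 0 := by simpa using hc 0
  have hs := summable_entry9Term hre
  have hs' := summable_entry9Term hre'
  have hlim := ((tendsto_poch_div_poch hre).const_sub (poch a 1 / poch c 1)).div_const (c - a)
  rw [← hs.tsum_sub hs']
  have hsum : ∑' k, (entry9Term a c k - entry9Term a (c + 1) k) =
      (poch a 1 / poch c 1 - 0) / (c - a) := by
    refine tendsto_nhds_unique (hs.sub hs').hasSum.tendsto_sum_nat (hlim.congr fun n ↦ ?_)
    simp only [entry9Term_sub_entry9Term_add_one (sub_ne_zero.1 hca) hc, ← Finset.sum_div]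
    rw [Finset.sum_range_sub' fun k ↦ poch a (k + 1) / poch c (k + 1)]
  rw [hsum, poch_succ, poch_succ, poch_zero, poch_zero]
  simp only [Nat.cast_zero, add_zero, one_mul, sub_zero]
  field_simp
  ring

theorem entry9Defect_add_one (hre : 0 < (c - a).re) (hc : ∀ n : ℕ, c ≠ -n) :
    entry9Defect a (c + 1) = entry9Defect a c := by
  have hsum := tsum_entry9Term_sub_tsum_entry9Term_add_one hre hc
  rw [entry9Defect, entry9Defect, add_sub_right_comm, Complex.digamma_apply_add_one c hc,
    Complex.digamma_apply_add_one (c - a) (ne_neg_natCast_of_re_pos hre)]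
  linear_combination -hsum

theorem entry9Defect_add_natCast (hre : 0 < (c - a).re) (hc : ∀ n : ℕ, c ≠ -n) (n : ℕ) :
    entry9Defect a (c + n) = entry9Defect a c := by
  induction n with
  | zero => simp
  | succ n ih =>
    have hre' : 0 < (c + n - a).re := by
      rw [add_sub_right_comm, Complex.add_re, Complex.natCast_re]
      positivity
    rw [Nat.cast_succ, ← add_assoc,
      entry9Defect_add_one hre' (add_natCast_ne_neg_natCast hc n), ih]

theorem norm_entry9Term_add_natCast_le (a : ℂ) (hc : 0 < c.re) (n k : ℕ) :
    ‖entry9Term a (c + n) k‖ ≤ ‖c‖ / ‖c + n‖ * ‖entry9Term a c k‖ := by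
  have hc' := ne_neg_natCast_of_re_pos hc
  have hc0 : 0 < ‖c‖ := norm_pos_iff.2 (by simpa using hc' 0)
  have hcn : 0 < ‖c + n‖ := norm_pos_iff.2 (add_natCast_ne_zero hc' n)
  have hc1 : 0 < (c + 1).re := by
    rw [Complex.add_re, Complex.one_re]
    positivity
  have hpoch : 0 < ‖poch (c + 1) k‖ :=
    norm_pos_iff.2 (poch_ne_zero (ne_neg_natCast_of_re_pos hc1) k)
  have hmono : ‖poch (c + 1) k‖ ≤ ‖poch (c + n + 1) k‖ := by
    rw [add_right_comm]
    exact norm_poch_le_norm_poch_add_natCast hc1.le n k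
  simp only [entry9Term, poch_succ_left c, poch_succ_left (c + n), norm_div, norm_mul]
  calc ‖poch a (k + 1)‖ / (‖((k + 1 : ℕ) : ℂ)‖ * (‖c + n‖ * ‖poch (c + n + 1) k‖))
      ≤ ‖poch a (k + 1)‖ / (‖((k + 1 : ℕ) : ℂ)‖ * (‖c + n‖ * ‖poch (c + 1) k‖)) := by
        gcongr
        rw [Complex.norm_natCast]
        positivity
    _ = ‖c‖ / ‖c + n‖ *
        (‖poch a (k + 1)‖ / (‖((k + 1 : ℕ) : ℂ)‖ * (‖c‖ * ‖poch (c + 1) k‖))) := by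
        field_simp

theorem tendsto_tsum_entry9Term_add_natCast (hre : 0 < (c - a).re) (hc : 0 < c.re) :
    Tendsto (fun n : ℕ ↦ ∑' k, entry9Term a (c + n) k) atTop (𝓝 0) := by
  have hnorm : Tendsto (fun n : ℕ ↦ ‖c + n‖) atTop atTop := by
    refine tendsto_atTop_mono (fun n ↦ ?_) tendsto_natCast_atTop_atTop
    calc (n : ℝ) ≤ (c + n).re := by simpa using hc.le
      _ ≤ ‖c + n‖ := Complex.re_le_norm _
  have hlim : Tendsto (fun n : ℕ ↦ ‖c‖ / ‖c + n‖ * ∑' k, ‖entry9Term a c k‖) atTop (𝓝 0) := by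
    simpa using (hnorm.const_div_atTop ‖c‖).mul_const (∑' k, ‖entry9Term a c k‖)
  refine squeeze_zero_norm (fun n ↦ ?_) hlim
  exact tsum_of_norm_bounded ((summable_entry9Term hre).norm.hasSum.mul_left _)
    (norm_entry9Term_add_natCast_le a hc n)

theorem tendsto_entry9Defect_add_natCast (hre : 0 < (c - a).re) (hc : 0 < c.re) :
    Tendsto (fun n : ℕ ↦ entry9Defect a (c + n)) atTop (𝓝 0) := by
  have hlim := (tendsto_tsum_entry9Term_add_natCast hre hc).sub
    (tendsto_digamma_add_natCast_sub hc hre)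
  rw [sub_zero] at hlim
  refine hlim.congr fun n ↦ ?_
  rw [entry9Defect, add_sub_right_comm]

theorem entry9Defect_eq_zero (hre : 0 < (c - a).re) (hc : ∀ n : ℕ, c ≠ -n) :
    entry9Defect a c = 0 := by
  obtain ⟨N, hN⟩ := exists_nat_gt (-c.re)
  have hre' : 0 < (c + N - a).re := by
    rw [add_sub_right_comm, Complex.add_re, Complex.natCast_re]
    positivity
  have hcN : 0 < (c + N).re := by
    rw [Complex.add_re, Complex.natCast_re]
    linarith
  refine tendsto_nhds_unique (tendsto_const_nhds.congr fun n ↦ ?_)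
    (tendsto_entry9Defect_add_natCast hre' hcN)
  rw [add_assoc, ← Nat.cast_add, entry9Defect_add_natCast hre hc]

theorem hasSum_entry9Term (hre : 0 < (c - a).re) (hc : ∀ n : ℕ, c ≠ -n) :
    HasSum (entry9Term a c) (Complex.digamma c - Complex.digamma (c - a)) := by
  rw [← sub_eq_zero.1 (entry9Defect_eq_zero hre hc)]
  exact (summable_entry9Term hre).hasSum

end Entry9

/-- Ramanujan's Entry 9: for `Re(c-a) > 0`,
`Σ_{k=1}^∞ (a)_k / (k (c)_k) = ψ(c) - ψ(c-a)`. -/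
theorem ramanujan_entry9
    (a c : ℂ)
    (hre : (c - a).re > 0)
    (hc : ∀ n : ℕ, c ≠ -(n : ℂ))
    (hca : ∀ n : ℕ, c - a ≠ -(n : ℂ)) :
    ∑' k : ℕ, poch a (k + 1) / (((k + 1 : ℕ) : ℂ) * poch c (k + 1))
      = digamma c - digamma (c - a) :=
  (hasSum_entry9Term hre hc).tsum_eq
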